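/- arXiv:1809.08206 — 2 statements merged into one kernel-verified Lean document; each statement's English description precedes it below -/
import Mathlib

section
/- Let {(x_i, y_i, d_i) : i = 1,...,N} be Hermite data with x_1 < x_2 < ... < x_N (N > 2). Suppose |α_i| ≤ κ a_i with 0 ≤ κ < 1, u_i > 0 and v_i ≥ 0 for all i = 1,...,N−1. Then the unique continuous function Ψ : I → ℝ satisfying Ψ(L_i(x)) = α_i Ψ(x) + q_i(x), with q_i the rational cubic with coefficients U_i = u_i(y_i − α_i y_1), V_i = (3u_i + v_i)(y_i − α_i y_1) + u_i h_i d_i − α_i u_i (x_N − x_1) d_1, W_i = (3u_i + v_i)(y_{i+1} − α_i y_N) − u_i h_i d_{i+1} + α_i u_i (x_N − x_1) d_N, Z_i = u_i(y_{i+1} − α_i y_N), is continuously differentiable on I and satisfies Ψ(x_i) = y_i and Ψ'(x_i) = d_i for every i = 1,...,N; moreover Ψ' satisfies Ψ'(L_i(x)) = (α_i Ψ'(x) + q_i'(x))/a_i for all x ∈ I. -/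
/-!
The derivative of `Ψ`, if it exists, must satisfy the differentiated functional equation, whose
vertical scalings `α i / a i` still have modulus at most `κ < 1`. Banach's fixed point theorem
solves that equation by a continuous `f` with `f (x i) = d i`; the coefficients `U, V, W, Z` are
exactly those for which the pieces fit together at the knots. A primitive `Φ` of `f` then solves the
original equation up to one constant `Φ (x i) - y i` per subinterval. Comparing end points, these
constants grow by `α i • (Φ (x N) - y N)`, and since `∑ α i ≠ 1` they all vanish. Uniqueness of the
continuous solution gives `Ψ = Φ`.
-/

open Set

section Mesh

variable {x : ℕ → ℝ} {m n i : ℕ}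

/-- The length of `[x i, x (i + 1)]` relative to that of `[x m, x n]`; the `aᵢ` of fractal
interpolation. -/
noncomputable def meshRatio (x : ℕ → ℝ) (m n i : ℕ) : ℝ := (x (i + 1) - x i) / (x n - x m)

/-- The increasing affine map of `[x m, x n]` onto `[x i, x (i + 1)]`; the `Lᵢ` of fractal
interpolation. -/
noncomputable def meshMap (x : ℕ → ℝ) (m n i : ℕ) (t : ℝ) : ℝ :=
  x i + meshRatio x m n i * (t - x m)

theorem knot_left_lt_right (hx : StrictMonoOn x (Icc m n)) (hmn : m < n) : x m < x n :=
  hx (left_mem_Icc.2 hmn.le) (right_mem_Icc.2 hmn.le) hmn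

theorem knot_mem_Icc (hx : StrictMonoOn x (Icc m n)) (hi : i ∈ Icc m n) :
    x i ∈ Icc (x m) (x n) :=
  have hmn : m ≤ n := hi.1.trans hi.2
  ⟨hx.monotoneOn (left_mem_Icc.2 hmn) hi hi.1, hx.monotoneOn hi (right_mem_Icc.2 hmn) hi.2⟩

theorem exists_mem_Icc_knots {α : Type*} [LinearOrder α] {x : ℕ → α} (hmn : m < n) {s : α}
    (hs : s ∈ Icc (x m) (x n)) : ∃ i ∈ Ico m n, s ∈ Icc (x i) (x (i + 1)) := by
  induction n, hmn using Nat.le_induction with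
  | base => exact ⟨m, by simp, hs⟩
  | succ n hmn ih =>
    rcases le_total s (x n) with hsn | hsn
    · obtain ⟨i, hi, hsi⟩ := ih ⟨hs.1, hsn⟩
      exact ⟨i, ⟨hi.1, hi.2.trans n.lt_succ_self⟩, hsi⟩
    · exact ⟨n, ⟨by omega, n.lt_succ_self⟩, hsn, hs.2⟩

theorem exists_continuous_eqOn_Icc_knots {α β : Type*} [TopologicalSpace α] [LinearOrder α]
    [OrderClosedTopology α] [TopologicalSpace β] {x : ℕ → α} (hmn : m ≤ n)
    (hx : MonotoneOn x (Icc m n)) {g : ℕ → α → β} {d : ℕ → β}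
    (hg : ∀ i ∈ Ico m n, Continuous (g i)) (hleft : ∀ i ∈ Ico m n, g i (x i) = d i)
    (hright : ∀ i ∈ Ico m n, g i (x (i + 1)) = d (i + 1)) :
    ∃ h : α → β, Continuous h ∧ (∀ i ∈ Icc m n, h (x i) = d i) ∧
      ∀ i ∈ Ico m n, EqOn h (g i) (Icc (x i) (x (i + 1))) := by
  suffices ∃ h : α → β, Continuous h ∧ h (x n) = d n ∧
      ∀ i ∈ Ico m n, EqOn h (g i) (Icc (x i) (x (i + 1))) by
    obtain ⟨h, hh, hhn, hhg⟩ := this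
    refine ⟨h, hh, fun i hi => ?_, hhg⟩
    rcases hi.2.eq_or_lt with rfl | hin
    · exact hhn
    · have hle := hx hi ⟨Nat.le_succ_of_le hi.1, hin⟩ i.le_succ
      rw [hhg i ⟨hi.1, hin⟩ (left_mem_Icc.2 hle), hleft i ⟨hi.1, hin⟩]
  induction n, hmn using Nat.le_induction with
  | base => exact ⟨fun _ => d m, continuous_const, rfl, by simp⟩
  | succ n hmn ih =>
    have hsub : Ico m n ⊆ Ico m (n + 1) := Ico_subset_Ico_right n.le_succ
    have hlast : n ∈ Ico m (n + 1) := ⟨hmn, n.lt_succ_self⟩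
    obtain ⟨h, hh, hhn, hhg⟩ := ih (hx.mono (Icc_subset_Icc_right n.le_succ))
      (fun i hi => hg i (hsub hi)) (fun i hi => hleft i (hsub hi)) (fun i hi => hright i (hsub hi))
    have hjoin : h (x n) = g n (x n) := hhn.trans (hleft n hlast).symm
    have heq : EqOn (fun s => if s ≤ x n then h s else g n s) (g n) (Ici (x n)) := by
      intro s hs
      rcases (mem_Ici.1 hs).eq_or_lt with rfl | hlt
      · simpa using hjoin
      · simp [hlt.not_ge]
    refine ⟨fun s => if s ≤ x n then h s else g n s, ?_, ?_, fun i hi s hs => ?_⟩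
    · exact hh.if_le (hg n hlast) continuous_id continuous_const (by rintro s rfl; exact hjoin)
    · exact (heq (hx ⟨hmn, n.le_succ⟩ ⟨by omega, le_rfl⟩ n.le_succ)).trans (hright n hlast)
    · rcases (Nat.lt_succ_iff.1 hi.2).eq_or_lt with rfl | hin
      · exact heq hs.1
      · have hsn : s ≤ x n :=
          hs.2.trans (hx ⟨by have := hi.1; omega, by omega⟩ ⟨hmn, n.le_succ⟩ hin)
        simpa only [if_pos hsn] using hhg i ⟨hi.1, hin⟩ hs

theorem meshRatio_pos (hx : StrictMonoOn x (Icc m n)) (hi : i ∈ Ico m n) :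
    0 < meshRatio x m n i :=
  div_pos (sub_pos.2 (hx ⟨hi.1, hi.2.le⟩ ⟨Nat.le_succ_of_le hi.1, hi.2⟩ i.lt_succ_self))
    (sub_pos.2 (knot_left_lt_right hx (hi.1.trans_lt hi.2)))

theorem meshRatio_le_one (hx : StrictMonoOn x (Icc m n)) (hi : i ∈ Ico m n) :
    meshRatio x m n i ≤ 1 := by
  have hleft := (knot_mem_Icc hx ⟨hi.1, hi.2.le⟩).1
  have hright := (knot_mem_Icc hx ⟨Nat.le_succ_of_le hi.1, hi.2⟩).2
  rw [meshRatio, div_le_one (sub_pos.2 (knot_left_lt_right hx (hi.1.trans_lt hi.2)))]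
  linarith

theorem sum_meshRatio (hx : StrictMonoOn x (Icc m n)) (hmn : m < n) :
    ∑ i ∈ Finset.Ico m n, meshRatio x m n i = 1 := by
  simp only [meshRatio]
  rw [← Finset.sum_div, Finset.sum_Ico_sub x hmn.le,
    div_self (sub_pos.2 (knot_left_lt_right hx hmn)).ne']

@[simp]
theorem meshMap_left (x : ℕ → ℝ) (m n i : ℕ) : meshMap x m n i (x m) = x i := by simp [meshMap]

theorem meshMap_right (h : x m ≠ x n) (i : ℕ) : meshMap x m n i (x n) = x (i + 1) := by
  rw [meshMap, meshRatio, div_mul_cancel₀ _ (sub_ne_zero.2 h.symm), add_sub_cancel]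

theorem meshMap_eq_mul_add (h : x m ≠ x n) (i : ℕ) (t : ℝ) :
    meshMap x m n i t =
      meshRatio x m n i * t + (x n * x i - x m * x (i + 1)) / (x n - x m) := by
  have hwidth : x n - x m ≠ 0 := sub_ne_zero.2 h.symm
  rw [meshMap, meshRatio]
  field_simp
  ring

theorem continuous_meshMap (x : ℕ → ℝ) (m n i : ℕ) : Continuous (meshMap x m n i) := by
  unfold meshMap; fun_prop

theorem hasDerivAt_meshMap (x : ℕ → ℝ) (m n i : ℕ) (t : ℝ) :
    HasDerivAt (meshMap x m n i) (meshRatio x m n i) t :=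
  ((((hasDerivAt_id t).sub_const (x m)).const_mul (meshRatio x m n i)).const_add (x i)).congr_deriv
    (mul_one _)

theorem meshMap_mem_Icc (hx : StrictMonoOn x (Icc m n)) (hi : i ∈ Ico m n) {t : ℝ}
    (ht : t ∈ Icc (x m) (x n)) : meshMap x m n i t ∈ Icc (x i) (x (i + 1)) := by
  have hratio := (meshRatio_pos hx hi).le
  rw [← meshMap_right (knot_left_lt_right hx (hi.1.trans_lt hi.2)).ne i]
  exact ⟨le_add_of_nonneg_right (mul_nonneg hratio (sub_nonneg.2 ht.1)),
    add_le_add_right (mul_le_mul_of_nonneg_left (sub_le_sub_right ht.2 _) hratio) _⟩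

theorem mapsTo_meshMap (hx : StrictMonoOn x (Icc m n)) (hi : i ∈ Ico m n) :
    MapsTo (meshMap x m n i) (Icc (x m) (x n)) (Icc (x m) (x n)) := fun _ ht =>
  Icc_subset_Icc (knot_mem_Icc hx ⟨hi.1, hi.2.le⟩).1
    (knot_mem_Icc hx ⟨Nat.le_succ_of_le hi.1, hi.2⟩).2 (meshMap_mem_Icc hx hi ht)

theorem exists_meshMap_eq (hx : StrictMonoOn x (Icc m n)) (hmn : m < n) {s : ℝ}
    (hs : s ∈ Icc (x m) (x n)) :
    ∃ i ∈ Ico m n, ∃ t ∈ Icc (x m) (x n), meshMap x m n i t = s := by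
  have hlt := knot_left_lt_right hx hmn
  obtain ⟨i, hi, hsi⟩ := exists_mem_Icc_knots hmn hs
  refine ⟨i, hi, intermediate_value_Icc hlt.le (continuous_meshMap x m n i).continuousOn ?_⟩
  rwa [meshMap_left, meshMap_right hlt.ne]

theorem exists_continuous_comp_meshMap {β : Type*} [TopologicalSpace β]
    (hx : StrictMonoOn x (Icc m n)) (hmn : m < n) {g : ℕ → ℝ → β} {d : ℕ → β}
    (hg : ∀ i ∈ Ico m n, ContinuousOn (g i) (Icc (x m) (x n)))
    (hleft : ∀ i ∈ Ico m n, g i (x m) = d i) (hright : ∀ i ∈ Ico m n, g i (x n) = d (i + 1)) :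
    ∃ h : ℝ → β, Continuous h ∧ (∀ i ∈ Icc m n, h (x i) = d i) ∧
      ∀ i ∈ Ico m n, ∀ t ∈ Icc (x m) (x n), h (meshMap x m n i t) = g i t := by
  have hlt := knot_left_lt_right hx hmn
  let piece (i : ℕ) (s : ℝ) : β :=
    IccExtend hlt.le ((Icc (x m) (x n)).domRestrict (g i)) (x m + (s - x i) / meshRatio x m n i)
  have hpiece : ∀ i ∈ Ico m n, ∀ t ∈ Icc (x m) (x n), piece i (meshMap x m n i t) = g i t := by
    intro i hi t ht
    have hinv : x m + (meshMap x m n i t - x i) / meshRatio x m n i = t := by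
      rw [meshMap, add_sub_cancel_left, mul_div_cancel_left₀ _ (meshRatio_pos hx hi).ne',
        add_sub_cancel]
    simp only [piece, hinv, IccExtend_of_mem hlt.le _ ht, domRestrict_apply]
  have hpiece_cont : ∀ i ∈ Ico m n, Continuous (piece i) := fun i hi =>
    (hg i hi).domRestrict.Icc_extend'.comp (by fun_prop)
  obtain ⟨h, hh, hhd, hhp⟩ := exists_continuous_eqOn_Icc_knots (d := d) hmn.le hx.monotoneOn
    hpiece_cont
    (fun i hi => by
      rw [← hleft i hi, ← hpiece i hi _ (left_mem_Icc.2 hlt.le), meshMap_left])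
    (fun i hi => by
      rw [← hright i hi, ← hpiece i hi _ (right_mem_Icc.2 hlt.le), meshMap_right hlt.ne])
  exact ⟨h, hh, hhd, fun i hi t ht =>
    (hhp i hi (meshMap_mem_Icc hx hi ht)).trans (hpiece i hi t ht)⟩

end Mesh

section SelfReferential

variable {E : Type*} [NormedAddCommGroup E] [NormedSpace ℝ E]
variable {x : ℕ → ℝ} {m n : ℕ} {c : ℕ → ℝ} {p : ℕ → ℝ → E} {κ : ℝ}

/-- `g` is the image of `f` under the Read–Bajraktarević operator with vertical scalings `c` and
displacements `p`. Only the values on `[x m, x n]` matter. -/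
def IsReadBajraktarevicImage (x : ℕ → ℝ) (m n : ℕ) (c : ℕ → ℝ) (p : ℕ → ℝ → E)
    (f g : ℝ → E) : Prop :=
  ∀ i ∈ Ico m n, ∀ t ∈ Icc (x m) (x n), g (meshMap x m n i t) = c i • f t + p i t

/-- `f` is a fixed point of the Read–Bajraktarević operator, i.e. it solves the functional equation
of a fractal interpolation function. -/
def IsSelfReferential (x : ℕ → ℝ) (m n : ℕ) (c : ℕ → ℝ) (p : ℕ → ℝ → E) (f : ℝ → E) : Prop :=
  IsReadBajraktarevicImage x m n c p f f

/-- Barnsley's join-up conditions: the maps `(t, z) ↦ (Lᵢ t, cᵢ z + pᵢ t)` send the end points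
`(x m, d m)` and `(x n, d n)` of the data to `(x i, d i)` and `(x (i + 1), d (i + 1))`. -/
def IsJoinUp (x : ℕ → ℝ) (m n : ℕ) (c : ℕ → ℝ) (p : ℕ → ℝ → E) (d : ℕ → E) : Prop :=
  ∀ i ∈ Ico m n, c i • d m + p i (x m) = d i ∧ c i • d n + p i (x n) = d (i + 1)

theorem IsReadBajraktarevicImage.norm_sub_le {f₁ f₂ g₁ g₂ : ℝ → E}
    (h₁ : IsReadBajraktarevicImage x m n c p f₁ g₁)
    (h₂ : IsReadBajraktarevicImage x m n c p f₂ g₂)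
    (hx : StrictMonoOn x (Icc m n)) (hmn : m < n) (hc : ∀ i ∈ Ico m n, |c i| ≤ κ) {C : ℝ}
    (hC : ∀ t ∈ Icc (x m) (x n), ‖f₁ t - f₂ t‖ ≤ C) {s : ℝ} (hs : s ∈ Icc (x m) (x n)) :
    ‖g₁ s - g₂ s‖ ≤ κ * C := by
  obtain ⟨i, hi, t, ht, rfl⟩ := exists_meshMap_eq hx hmn hs
  rw [h₁ i hi t ht, h₂ i hi t ht, add_sub_add_right_eq_sub, ← smul_sub, norm_smul, Real.norm_eq_abs]
  exact mul_le_mul (hc i hi) (hC t ht) (norm_nonneg _) ((abs_nonneg _).trans (hc i hi))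

theorem IsSelfReferential.eqOn {f g : ℝ → E} (hf : IsSelfReferential x m n c p f)
    (hg : IsSelfReferential x m n c p g) (hx : StrictMonoOn x (Icc m n)) (hmn : m < n)
    (hc : ∀ i ∈ Ico m n, |c i| ≤ κ) (hκ : κ < 1) (hf_cont : ContinuousOn f (Icc (x m) (x n)))
    (hg_cont : ContinuousOn g (Icc (x m) (x n))) : EqOn f g (Icc (x m) (x n)) := by
  obtain ⟨s, hs, hmax⟩ := isCompact_Icc.exists_isMaxOn
    (nonempty_Icc.2 (knot_left_lt_right hx hmn).le) (hf_cont.sub hg_cont).norm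
  have hle : ‖f s - g s‖ ≤ κ * ‖f s - g s‖ := hf.norm_sub_le hg hx hmn hc (fun _ ht => hmax ht) hs
  have hzero : ‖f s - g s‖ ≤ 0 := by nlinarith
  exact fun t ht => sub_eq_zero.1 (norm_le_zero_iff.1 ((hmax ht).trans hzero))

theorem IsJoinUp.exists_isReadBajraktarevicImage {d : ℕ → E} (hpd : IsJoinUp x m n c p d)
    (hx : StrictMonoOn x (Icc m n)) (hmn : m < n)
    (hp : ∀ i ∈ Ico m n, ContinuousOn (p i) (Icc (x m) (x n))) {f : ℝ → E}
    (hf : ContinuousOn f (Icc (x m) (x n))) (hfm : f (x m) = d m) (hfn : f (x n) = d n) :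
    ∃ g : ℝ → E, Continuous g ∧ (∀ i ∈ Icc m n, g (x i) = d i) ∧
      IsReadBajraktarevicImage x m n c p f g :=
  exists_continuous_comp_meshMap (g := fun i t => c i • f t + p i t) hx hmn
    (fun i hi => (hf.const_smul (c i)).add (hp i hi))
    (fun i hi => by rw [hfm, (hpd i hi).1]) (fun i hi => by rw [hfn, (hpd i hi).2])

theorem IsJoinUp.exists_isSelfReferential [CompleteSpace E] {d : ℕ → E}
    (hpd : IsJoinUp x m n c p d) (hx : StrictMonoOn x (Icc m n)) (hmn : m < n)
    (hp : ∀ i ∈ Ico m n, ContinuousOn (p i) (Icc (x m) (x n)))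
    (hc : ∀ i ∈ Ico m n, |c i| ≤ κ) (hκ : κ < 1) :
    ∃ f : ℝ → E, Continuous f ∧ (∀ i ∈ Icc m n, f (x i) = d i) ∧ IsSelfReferential x m n c p f := by
  have hlt := knot_left_lt_right hx hmn
  have hκ₀ : 0 ≤ κ := (abs_nonneg _).trans (hc m (left_mem_Ico.2 hmn))
  let left : Icc (x m) (x n) := ⟨x m, left_mem_Icc.2 hlt.le⟩
  let right : Icc (x m) (x n) := ⟨x n, right_mem_Icc.2 hlt.le⟩
  let S : Set C(Icc (x m) (x n), E) := {f | f left = d m ∧ f right = d n}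
  have hS : IsClosed S :=
    (isClosed_eq (continuous_eval_const left) continuous_const).inter
      (isClosed_eq (continuous_eval_const right) continuous_const)
  have : CompleteSpace S := hS.completeSpace_coe
  have himage (f : S) : ∃ g : ℝ → E, Continuous g ∧ (∀ i ∈ Icc m n, g (x i) = d i) ∧
      IsReadBajraktarevicImage x m n c p (IccExtend hlt.le f.1) g :=
    hpd.exists_isReadBajraktarevicImage hx hmn hp f.1.continuous.Icc_extend'.continuousOn
      ((IccExtend_left hlt.le f.1).trans f.2.1) ((IccExtend_right hlt.le f.1).trans f.2.2)
  choose R hR_cont hR_knot hR using himage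
  let T (f : S) : S :=
    ⟨⟨(Icc (x m) (x n)).domRestrict (R f), (hR_cont f).continuousOn.domRestrict⟩,
      hR_knot f m (left_mem_Icc.2 hmn.le), hR_knot f n (right_mem_Icc.2 hmn.le)⟩
  have hT : ContractingWith ⟨κ, hκ₀⟩ T := by
    refine ⟨hκ, LipschitzWith.of_dist_le_mul fun f g => ?_⟩
    refine (ContinuousMap.dist_le (mul_nonneg hκ₀ dist_nonneg)).2 fun s => ?_
    rw [dist_eq_norm]
    refine (hR f).norm_sub_le (hR g) hx hmn hc (fun t ht => ?_) s.2
    rw [IccExtend_of_mem _ _ ht, IccExtend_of_mem _ _ ht, ← dist_eq_norm]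
    exact ContinuousMap.dist_apply_le_dist _
  have : Nonempty S := by
    refine ⟨⟨fun s => AffineMap.lineMap (d m) (d n) ((s - x m) / (x n - x m)), ?_⟩, ?_, ?_⟩
    · fun_prop
    · simp [left]
    · simp [right, (sub_pos.2 hlt).ne']
  let f := ContractingWith.fixedPoint T hT
  have hf : EqOn (IccExtend hlt.le f.1) (R f) (Icc (x m) (x n)) := fun t ht => by
    rw [IccExtend_of_mem _ _ ht]
    exact congrArg (fun g : S => g.1 ⟨t, ht⟩) hT.fixedPoint_isFixedPt.symm
  exact ⟨R f, hR_cont f, hR_knot f, fun i hi t ht => by rw [hR f i hi t ht, hf ht]⟩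

end SelfReferential

section Derivative

variable {E : Type*} [NormedAddCommGroup E] [NormedSpace ℝ E]
variable {x α : ℕ → ℝ} {m n : ℕ} {q q' : ℕ → ℝ → E} {y d : ℕ → E} {κ : ℝ}

theorem eq_zero_of_forall_eq_add_smul {K M : Type*} [Field K] [AddCommGroup M] [Module K M]
    {m n : ℕ} {α : ℕ → K} {e : ℕ → M} (hm : e m = 0)
    (hstep : ∀ i ∈ Ico m n, e (i + 1) = e i + α i • e n)
    (hα : ∑ i ∈ Finset.Ico m n, α i ≠ 1) {i : ℕ} (hi : i ∈ Icc m n) : e i = 0 := by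
  have hsum : ∀ k ∈ Icc m n, e k = (∑ i ∈ Finset.Ico m k, α i) • e n := by
    rintro k ⟨hmk, hkn⟩
    rw [Finset.sum_smul, ← sub_zero (e k), ← hm, ← Finset.sum_Ico_sub e hmk]
    refine Finset.sum_congr rfl fun i hi => ?_
    rw [Finset.mem_Ico] at hi
    rw [hstep i ⟨hi.1, hi.2.trans_le hkn⟩, add_sub_cancel_left]
  have hen : (1 - ∑ i ∈ Finset.Ico m n, α i) • e n = 0 := by
    rw [sub_smul, one_smul, ← hsum n ⟨hi.1.trans hi.2, le_rfl⟩, sub_self]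
  rw [hsum i hi, (smul_eq_zero.1 hen).resolve_left (sub_ne_zero.2 hα.symm), smul_zero]

variable {f Φ : ℝ → E}

theorem IsSelfReferential.primitive_comp_meshMap
    (hf : IsSelfReferential x m n (fun i => α i / meshRatio x m n i)
      (fun i t => (meshRatio x m n i)⁻¹ • q' i t) f)
    (hx : StrictMonoOn x (Icc m n)) {i : ℕ} (hi : i ∈ Ico m n)
    (hq : ∀ t ∈ Icc (x m) (x n), HasDerivWithinAt (q i) (q' i t) (Icc (x m) (x n)) t)
    (hΦ : ∀ t ∈ Icc (x m) (x n), HasDerivWithinAt Φ (f t) (Icc (x m) (x n)) t)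
    {t : ℝ} (ht : t ∈ Icc (x m) (x n)) :
    Φ (meshMap x m n i t) - α i • Φ t - q i t = Φ (x i) - α i • Φ (x m) - q i (x m) := by
  have hlt := knot_left_lt_right hx (hi.1.trans_lt hi.2)
  have hderiv : ∀ t ∈ Icc (x m) (x n), HasDerivWithinAt
      (fun t => Φ (meshMap x m n i t) - α i • Φ t - q i t) 0 (Icc (x m) (x n)) t := by
    intro t ht
    have hcomp := (hΦ _ (mapsTo_meshMap hx hi ht)).scomp t
      (hasDerivAt_meshMap x m n i t).hasDerivWithinAt (mapsTo_meshMap hx hi)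
    refine ((hcomp.sub ((hΦ t ht).const_smul (α i))).sub (hq t ht)).congr_deriv ?_
    have hratio := (meshRatio_pos hx hi).ne'
    rw [hf i hi t ht, smul_add, smul_smul, mul_div_cancel₀ _ hratio, smul_inv_smul₀ hratio]
    abel
  simpa only [meshMap_left] using constant_of_derivWithin_zero
    (fun t ht => (hderiv t ht).differentiableWithinAt)
    (fun t ht => (hderiv t (Ico_subset_Icc_self ht)).derivWithin
      (uniqueDiffOn_Icc hlt t (Ico_subset_Icc_self ht))) t ht

theorem IsJoinUp.primitive_knot (hqy : IsJoinUp x m n α q y)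
    (hf : IsSelfReferential x m n (fun i => α i / meshRatio x m n i)
      (fun i t => (meshRatio x m n i)⁻¹ • q' i t) f)
    (hx : StrictMonoOn x (Icc m n))
    (hq : ∀ i ∈ Ico m n, ∀ t ∈ Icc (x m) (x n),
      HasDerivWithinAt (q i) (q' i t) (Icc (x m) (x n)) t)
    (hΦ : ∀ t ∈ Icc (x m) (x n), HasDerivWithinAt Φ (f t) (Icc (x m) (x n)) t)
    (hΦm : Φ (x m) = y m) (hα : ∑ i ∈ Finset.Ico m n, α i ≠ 1) {i : ℕ} (hi : i ∈ Icc m n) :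
    Φ (x i) = y i := by
  refine sub_eq_zero.1 (eq_zero_of_forall_eq_add_smul (e := fun i => Φ (x i) - y i)
    (sub_eq_zero.2 hΦm) (fun i hi => ?_) hα hi)
  have hlt := knot_left_lt_right hx (hi.1.trans_lt hi.2)
  have hconst := hf.primitive_comp_meshMap hx hi (hq i hi) hΦ (right_mem_Icc.2 hlt.le)
  rw [meshMap_right hlt.ne, hΦm] at hconst
  simp only [← (hqy i hi).1, ← (hqy i hi).2]
  linear_combination (norm := module) hconst

theorem IsJoinUp.isSelfReferential_primitive (hqy : IsJoinUp x m n α q y)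
    (hf : IsSelfReferential x m n (fun i => α i / meshRatio x m n i)
      (fun i t => (meshRatio x m n i)⁻¹ • q' i t) f)
    (hx : StrictMonoOn x (Icc m n))
    (hq : ∀ i ∈ Ico m n, ∀ t ∈ Icc (x m) (x n),
      HasDerivWithinAt (q i) (q' i t) (Icc (x m) (x n)) t)
    (hΦ : ∀ t ∈ Icc (x m) (x n), HasDerivWithinAt Φ (f t) (Icc (x m) (x n)) t)
    (hΦm : Φ (x m) = y m) (hα : ∑ i ∈ Finset.Ico m n, α i ≠ 1) :
    IsSelfReferential x m n α q Φ := by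
  intro i hi t ht
  have hconst := hf.primitive_comp_meshMap hx hi (hq i hi) hΦ ht
  rw [hqy.primitive_knot hf hx hq hΦ hΦm hα ⟨hi.1, hi.2.le⟩, hΦm, ← (hqy i hi).1] at hconst
  linear_combination (norm := module) hconst

theorem sum_ne_one_of_abs_le_mul_meshRatio (hx : StrictMonoOn x (Icc m n)) (hmn : m < n)
    (hα : ∀ i ∈ Ico m n, |α i| ≤ κ * meshRatio x m n i) (hκ : κ < 1) :
    ∑ i ∈ Finset.Ico m n, α i ≠ 1 := by
  refine ne_of_lt ?_
  calc ∑ i ∈ Finset.Ico m n, α i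
      ≤ ∑ i ∈ Finset.Ico m n, κ * meshRatio x m n i :=
        Finset.sum_le_sum fun i hi => (le_abs_self _).trans (hα i (Finset.mem_Ico.1 hi))
    _ = κ := by rw [← Finset.mul_sum, sum_meshRatio hx hmn, mul_one]
    _ < 1 := hκ

theorem exists_primitive [CompleteSpace E] (hf : Continuous f) (a : ℝ) (z : E) :
    ∃ Φ : ℝ → E, Φ a = z ∧ ∀ t, HasDerivAt Φ (f t) t :=
  ⟨fun t => z + ∫ s in a..t, f s, by simp,
    fun t => (hf.integral_hasStrictDerivAt a t).hasDerivAt.const_add z⟩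

theorem abs_le_of_abs_le_mul_meshRatio (hx : StrictMonoOn x (Icc m n)) {i : ℕ} (hi : i ∈ Ico m n)
    {a : ℝ} (ha : |a| ≤ κ * meshRatio x m n i) : |a| ≤ κ :=
  have hκ : 0 ≤ κ := nonneg_of_mul_nonneg_left ((abs_nonneg a).trans ha) (meshRatio_pos hx hi)
  ha.trans (mul_le_of_le_one_right hκ (meshRatio_le_one hx hi))

theorem IsJoinUp.exists_contDiff_isSelfReferential [CompleteSpace E]
    (hqy : IsJoinUp x m n α q y)
    (hqd : IsJoinUp x m n (fun i => α i / meshRatio x m n i)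
      (fun i t => (meshRatio x m n i)⁻¹ • q' i t) d)
    (hx : StrictMonoOn x (Icc m n)) (hmn : m < n)
    (hα : ∀ i ∈ Ico m n, |α i| ≤ κ * meshRatio x m n i) (hκ : κ < 1)
    (hq : ∀ i ∈ Ico m n, ∀ t ∈ Icc (x m) (x n),
      HasDerivWithinAt (q i) (q' i t) (Icc (x m) (x n)) t)
    (hq' : ∀ i ∈ Ico m n, ContinuousOn (q' i) (Icc (x m) (x n))) :
    ∃ Φ : ℝ → E, ContDiff ℝ 1 Φ ∧ IsSelfReferential x m n α q Φ ∧
      IsSelfReferential x m n (fun i => α i / meshRatio x m n i)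
        (fun i t => (meshRatio x m n i)⁻¹ • q' i t) (deriv Φ) ∧
      ∀ i ∈ Icc m n, Φ (x i) = y i ∧ deriv Φ (x i) = d i := by
  have hα' : ∀ i ∈ Ico m n, |α i / meshRatio x m n i| ≤ κ := fun i hi => by
    have hratio := meshRatio_pos hx hi
    rw [abs_div, abs_of_pos hratio, div_le_iff₀ hratio]
    exact hα i hi
  obtain ⟨f, hf_cont, hf_knot, hf⟩ :=
    hqd.exists_isSelfReferential hx hmn (fun i hi => (hq' i hi).const_smul _) hα' hκ
  obtain ⟨Φ, hΦm, hΦ⟩ := exists_primitive hf_cont (x m) (y m)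
  have hderiv : deriv Φ = f := funext fun t => (hΦ t).deriv
  have hΦ_within : ∀ t ∈ Icc (x m) (x n), HasDerivWithinAt Φ (f t) (Icc (x m) (x n)) t :=
    fun t _ => (hΦ t).hasDerivWithinAt
  have hsum := sum_ne_one_of_abs_le_mul_meshRatio hx hmn hα hκ
  exact ⟨Φ, contDiff_one_iff_deriv.2 ⟨fun t => (hΦ t).differentiableAt, hderiv ▸ hf_cont⟩,
    hqy.isSelfReferential_primitive hf hx hq hΦ_within hΦm hsum, hderiv ▸ hf, fun i hi =>
      ⟨hqy.primitive_knot hf hx hq hΦ_within hΦm hsum hi, hderiv ▸ hf_knot i hi⟩⟩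

theorem IsSelfReferential.contDiffOn_and_derivWithin [CompleteSpace E] {Ψ : ℝ → E}
    (hΨ : IsSelfReferential x m n α q Ψ) (hΨ_cont : ContinuousOn Ψ (Icc (x m) (x n)))
    (hqy : IsJoinUp x m n α q y)
    (hqd : IsJoinUp x m n (fun i => α i / meshRatio x m n i)
      (fun i t => (meshRatio x m n i)⁻¹ • q' i t) d)
    (hx : StrictMonoOn x (Icc m n)) (hmn : m < n)
    (hα : ∀ i ∈ Ico m n, |α i| ≤ κ * meshRatio x m n i) (hκ : κ < 1)
    (hq : ∀ i ∈ Ico m n, ∀ t ∈ Icc (x m) (x n),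
      HasDerivWithinAt (q i) (q' i t) (Icc (x m) (x n)) t)
    (hq' : ∀ i ∈ Ico m n, ContinuousOn (q' i) (Icc (x m) (x n))) :
    ContDiffOn ℝ 1 Ψ (Icc (x m) (x n)) ∧
    (∀ i ∈ Icc m n, Ψ (x i) = y i) ∧
    (∀ i ∈ Icc m n, derivWithin Ψ (Icc (x m) (x n)) (x i) = d i) ∧
    IsSelfReferential x m n (fun i => α i / meshRatio x m n i)
      (fun i t => (meshRatio x m n i)⁻¹ • q' i t) (derivWithin Ψ (Icc (x m) (x n))) := by
  obtain ⟨Φ, hΦ_diff, hΦ, hΦ', hΦ_knot⟩ :=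
    hqy.exists_contDiff_isSelfReferential hqd hx hmn hα hκ hq hq'
  have hΨΦ : EqOn Ψ Φ (Icc (x m) (x n)) :=
    hΨ.eqOn hΦ hx hmn (fun i hi => abs_le_of_abs_le_mul_meshRatio hx hi (hα i hi)) hκ hΨ_cont
      hΦ_diff.continuous.continuousOn
  have hderiv : EqOn (derivWithin Ψ (Icc (x m) (x n))) (deriv Φ) (Icc (x m) (x n)) :=
    fun t ht => (derivWithin_congr hΨΦ (hΨΦ ht)).trans <|
      (hΦ_diff.differentiable one_ne_zero t).derivWithin
        (uniqueDiffOn_Icc (knot_left_lt_right hx hmn) t ht)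
  refine ⟨hΦ_diff.contDiffOn.congr hΨΦ,
    fun i hi => (hΨΦ (knot_mem_Icc hx hi)).trans (hΦ_knot i hi).1,
    fun i hi => (hderiv (knot_mem_Icc hx hi)).trans (hΦ_knot i hi).2, fun i hi t ht => ?_⟩
  rw [hderiv (mapsTo_meshMap hx hi ht), hderiv ht, hΦ' i hi t ht]

end Derivative

section RationalHermite

variable {u v y₀ y₁ d₀ d₁ : ℝ}

/-- The rational cubic Hermite interpolant on `[0, 1]` with end values `y₀`, `y₁`, end slopes
`d₀`, `d₁` and shape parameters `u`, `v`. -/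
noncomputable def rationalHermite (u v y₀ y₁ d₀ d₁ θ : ℝ) : ℝ :=
  (u * y₀ * (1 - θ) ^ 3 + ((3 * u + v) * y₀ + u * d₀) * θ * (1 - θ) ^ 2
    + ((3 * u + v) * y₁ - u * d₁) * θ ^ 2 * (1 - θ) + u * y₁ * θ ^ 3) / (u + v * θ * (1 - θ))

theorem rationalHermite_one_sub (θ : ℝ) :
    rationalHermite u v y₀ y₁ d₀ d₁ (1 - θ) = rationalHermite u v y₁ y₀ (-d₁) (-d₀) θ := by
  unfold rationalHermite; congr 1 <;> ring

theorem rationalHermite_zero (hu : u ≠ 0) : rationalHermite u v y₀ y₁ d₀ d₁ 0 = y₀ := by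
  simp [rationalHermite, hu]

theorem rationalHermite_one (hu : u ≠ 0) : rationalHermite u v y₀ y₁ d₀ d₁ 1 = y₁ := by
  simpa only [sub_zero] using (rationalHermite_one_sub 0).trans (rationalHermite_zero hu)

theorem hasDerivAt_rationalHermite_zero (hu : u ≠ 0) :
    HasDerivAt (rationalHermite u v y₀ y₁ d₀ d₁) d₀ 0 := by
  have hid := hasDerivAt_id' (0 : ℝ)
  have hsub := hid.const_sub 1
  have hnum : HasDerivAt (fun θ : ℝ => u * y₀ * (1 - θ) ^ 3
      + ((3 * u + v) * y₀ + u * d₀) * θ * (1 - θ) ^ 2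
      + ((3 * u + v) * y₁ - u * d₁) * θ ^ 2 * (1 - θ) + u * y₁ * θ ^ 3) (v * y₀ + u * d₀) 0 :=
    (((((hsub.pow 3).const_mul _).add ((hid.const_mul _).mul (hsub.pow 2))).add
      (((hid.pow 2).const_mul _).mul hsub)).add ((hid.pow 3).const_mul _)).congr_deriv
      (by norm_num; ring)
  have hden : HasDerivAt (fun θ : ℝ => u + v * θ * (1 - θ)) v 0 :=
    (((hid.const_mul v).mul hsub).const_add u).congr_deriv (by norm_num)
  refine (hnum.div hden (by simpa using hu)).congr_deriv ?_
  simp only [mul_zero, sub_zero, add_zero, mul_one, one_pow, zero_pow two_ne_zero,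
    zero_pow three_ne_zero]
  field_simp
  ring

theorem hasDerivAt_rationalHermite_one (hu : u ≠ 0) :
    HasDerivAt (rationalHermite u v y₀ y₁ d₀ d₁) d₁ 1 := by
  have hreflect : (fun θ => rationalHermite u v y₁ y₀ (-d₁) (-d₀) (1 - θ)) =
      rationalHermite u v y₀ y₁ d₀ d₁ := by
    funext θ
    rw [← rationalHermite_one_sub, sub_sub_cancel]
  have hzero : HasDerivAt (rationalHermite u v y₁ y₀ (-d₁) (-d₀)) (-d₁) (1 - 1) := by
    simpa only [sub_self] using hasDerivAt_rationalHermite_zero hu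
  simpa only [hreflect, neg_neg] using hzero.comp_const_sub 1 1

theorem contDiffAt_rationalHermite {k : WithTop ℕ∞} {θ : ℝ} (hu : 0 < u) (hv : 0 ≤ v)
    (hθ : θ ∈ Icc (0 : ℝ) 1) : ContDiffAt ℝ k (rationalHermite u v y₀ y₁ d₀ d₁) θ := by
  have hden : 0 < u + v * θ * (1 - θ) :=
    add_pos_of_pos_of_nonneg hu (mul_nonneg (mul_nonneg hv hθ.1) (sub_nonneg.2 hθ.2))
  exact ContDiffAt.div (by fun_prop) (by fun_prop) hden.ne'

end RationalHermite

section RationalPiece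

variable {x y d α u v : ℕ → ℝ} {m n i : ℕ}

/-- The rational cubic `qᵢ` on `[x m, x n]` for the Hermite data `y`, `d`: its end values and end
slopes are those for which `Lᵢ` carries Hermite data at `x m` and `x n` to Hermite data at `x i` and
`x (i + 1)`. -/
noncomputable def rationalPiece (x y d α u v : ℕ → ℝ) (m n i : ℕ) (t : ℝ) : ℝ :=
  rationalHermite (u i) (v i) (y i - α i * y m) (y (i + 1) - α i * y n)
    ((x (i + 1) - x i) * d i - α i * (x n - x m) * d m)
    ((x (i + 1) - x i) * d (i + 1) - α i * (x n - x m) * d n) ((t - x m) / (x n - x m))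

theorem rationalPiece_left (hu : u i ≠ 0) :
    rationalPiece x y d α u v m n i (x m) = y i - α i * y m := by
  rw [rationalPiece, sub_self, zero_div, rationalHermite_zero hu]

theorem rationalPiece_right (hlt : x m < x n) (hu : u i ≠ 0) :
    rationalPiece x y d α u v m n i (x n) = y (i + 1) - α i * y n := by
  rw [rationalPiece, div_self (sub_pos.2 hlt).ne', rationalHermite_one hu]

theorem deriv_rationalPiece_left (hu : u i ≠ 0) :
    deriv (rationalPiece x y d α u v m n i) (x m) =
      ((x (i + 1) - x i) * d i - α i * (x n - x m) * d m) / (x n - x m) := by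
  have hθ : HasDerivAt (fun t => (t - x m) / (x n - x m)) (1 / (x n - x m)) (x m) :=
    ((hasDerivAt_id _).sub_const _).div_const _
  exact (((hasDerivAt_rationalHermite_zero hu).comp_of_eq (x m) hθ (by simp)).congr_deriv
    (mul_one_div _ _)).deriv

theorem deriv_rationalPiece_right (hlt : x m < x n) (hu : u i ≠ 0) :
    deriv (rationalPiece x y d α u v m n i) (x n) =
      ((x (i + 1) - x i) * d (i + 1) - α i * (x n - x m) * d n) / (x n - x m) := by
  have hθ : HasDerivAt (fun t => (t - x m) / (x n - x m)) (1 / (x n - x m)) (x n) :=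
    ((hasDerivAt_id _).sub_const _).div_const _
  exact (((hasDerivAt_rationalHermite_one hu).comp_of_eq (x n) hθ
    (div_self (sub_pos.2 hlt).ne').symm).congr_deriv (mul_one_div _ _)).deriv

theorem contDiffAt_rationalPiece {k : WithTop ℕ∞} (hlt : x m < x n) (hu : 0 < u i) (hv : 0 ≤ v i)
    {t : ℝ} (ht : t ∈ Icc (x m) (x n)) :
    ContDiffAt ℝ k (rationalPiece x y d α u v m n i) t := by
  have hθ : (t - x m) / (x n - x m) ∈ Icc (0 : ℝ) 1 :=
    ⟨div_nonneg (sub_nonneg.2 ht.1) (sub_pos.2 hlt).le,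
      (div_le_one (sub_pos.2 hlt)).2 (sub_le_sub_right ht.2 _)⟩
  exact (contDiffAt_rationalHermite hu hv hθ).comp t
    (f := fun t => (t - x m) / (x n - x m)) (by fun_prop)

theorem hasDerivWithinAt_rationalPiece (hlt : x m < x n) (hu : 0 < u i) (hv : 0 ≤ v i)
    {t : ℝ} (ht : t ∈ Icc (x m) (x n)) :
    HasDerivWithinAt (rationalPiece x y d α u v m n i)
      (deriv (rationalPiece x y d α u v m n i) t) (Icc (x m) (x n)) t :=
  ((contDiffAt_rationalPiece hlt hu hv ht).differentiableAt one_ne_zero).hasDerivAt.hasDerivWithinAt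

theorem continuousOn_deriv_rationalPiece (hlt : x m < x n) (hu : 0 < u i) (hv : 0 ≤ v i) :
    ContinuousOn (deriv (rationalPiece x y d α u v m n i)) (Icc (x m) (x n)) := fun _ ht =>
  (((contDiffAt_rationalPiece (k := 1) hlt hu hv ht).continuousAt_fderiv one_ne_zero).clm_apply
    continuousAt_const).continuousWithinAt

theorem isJoinUp_rationalPiece (hx : StrictMonoOn x (Icc m n)) (hu : ∀ i ∈ Ico m n, u i ≠ 0) :
    IsJoinUp x m n α (rationalPiece x y d α u v m n) y := fun i hi => by
  have hlt := knot_left_lt_right hx (hi.1.trans_lt hi.2)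
  rw [rationalPiece_left (hu i hi), rationalPiece_right hlt (hu i hi)]
  simp only [smul_eq_mul, add_sub_cancel, and_self]

theorem isJoinUp_deriv_rationalPiece (hx : StrictMonoOn x (Icc m n))
    (hu : ∀ i ∈ Ico m n, u i ≠ 0) :
    IsJoinUp x m n (fun i => α i / meshRatio x m n i)
      (fun i t => (meshRatio x m n i)⁻¹ • deriv (rationalPiece x y d α u v m n i) t) d := by
  intro i hi
  have hlt := knot_left_lt_right hx (hi.1.trans_lt hi.2)
  have hratio := (meshRatio_pos hx hi).ne'
  have hlength : x (i + 1) - x i = meshRatio x m n i * (x n - x m) :=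
    (div_mul_cancel₀ _ (sub_pos.2 hlt).ne').symm
  have hwidth := (sub_pos.2 hlt).ne'
  simp only [smul_eq_mul]
  rw [deriv_rationalPiece_left (hu i hi), deriv_rationalPiece_right hlt (hu i hi), hlength]
  constructor <;> field_simp <;> ring

end RationalPiece

/-- With `|αᵢ| ≤ κ aᵢ` (`0 ≤ κ < 1`), `uᵢ > 0`, `vᵢ ≥ 0`, the rational
cubic spline FIF `Ψ` is `C¹` on `I`, interpolates `Ψ(xᵢ) = yᵢ`, `Ψ'(xᵢ) = dᵢ`,
and its derivative satisfies `Ψ'(Lᵢ(x)) = (αᵢ Ψ'(x) + qᵢ'(x))/aᵢ`. -/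
theorem stmt_3
    (N : ℕ) (hN : 2 < N)
    (x y d : ℕ → ℝ)
    (hx : ∀ i, 1 ≤ i → i < N → x i < x (i + 1))
    (a : ℕ → ℝ) (ha : ∀ i, a i = (x (i + 1) - x i) / (x N - x 1))
    (L : ℕ → ℝ → ℝ)
    (hL : ∀ i, 1 ≤ i → i < N → ∀ t : ℝ, L i t =
      a i * t + (x N * x i - x 1 * x (i + 1)) / (x N - x 1))
    (α u v : ℕ → ℝ) (κ : ℝ)
    (hκ0 : 0 ≤ κ) (hκ1 : κ < 1)
    (hα : ∀ i, 1 ≤ i → i < N → |α i| ≤ κ * a i)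
    (hu : ∀ i, 1 ≤ i → i < N → 0 < u i)
    (hv : ∀ i, 1 ≤ i → i < N → 0 ≤ v i)
    (U V W Z : ℕ → ℝ)
    (hU : ∀ i, U i = u i * (y i - α i * y 1))
    (hV : ∀ i, V i = (3 * u i + v i) * (y i - α i * y 1)
      + u i * (x (i + 1) - x i) * d i - α i * u i * (x N - x 1) * d 1)
    (hW : ∀ i, W i = (3 * u i + v i) * (y (i + 1) - α i * y N)
      - u i * (x (i + 1) - x i) * d (i + 1) + α i * u i * (x N - x 1) * d N)
    (hZ : ∀ i, Z i = u i * (y (i + 1) - α i * y N))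
    (q : ℕ → ℝ → ℝ)
    (hq : ∀ (i : ℕ) (t θ : ℝ), θ = (t - x 1) / (x N - x 1) →
      q i t = (U i * (1 - θ) ^ 3 + V i * θ * (1 - θ) ^ 2
        + W i * θ ^ 2 * (1 - θ) + Z i * θ ^ 3) / (u i + v i * θ * (1 - θ)))
    (Ψ : ℝ → ℝ)
    (hΨc : ContinuousOn Ψ (Set.Icc (x 1) (x N)))
    (hΨ : ∀ i, 1 ≤ i → i < N → ∀ t ∈ Set.Icc (x 1) (x N),
      Ψ (L i t) = α i * Ψ t + q i t) :
    ContDiffOn ℝ 1 Ψ (Set.Icc (x 1) (x N)) ∧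
    (∀ i, 1 ≤ i → i ≤ N → Ψ (x i) = y i) ∧
    (∀ i, 1 ≤ i → i ≤ N →
      derivWithin Ψ (Set.Icc (x 1) (x N)) (x i) = d i) ∧
    (∀ i, 1 ≤ i → i < N → ∀ t ∈ Set.Icc (x 1) (x N),
      derivWithin Ψ (Set.Icc (x 1) (x N)) (L i t) =
        (α i * derivWithin Ψ (Set.Icc (x 1) (x N)) t + deriv (q i) t) / a i) := by
  have hmn : 1 < N := by omega
  have hmono : StrictMonoOn x (Icc 1 N) :=
    strictMonoOn_of_lt_add_one ordConnected_Icc fun i _ hi hi' => hx i hi.1 hi'.2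
  have hlt := knot_left_lt_right hmono hmn
  have hu' : ∀ i ∈ Ico 1 N, u i ≠ 0 := fun i hi => (hu i hi.1 hi.2).ne'
  obtain rfl : a = meshRatio x 1 N := funext ha
  obtain rfl : q = rationalPiece x y d α u v 1 N := by
    funext i t
    rw [hq i t _ rfl, hU, hV, hW, hZ, rationalPiece, rationalHermite]
    ring
  have hL' : ∀ i ∈ Ico 1 N, ∀ t, L i t = meshMap x 1 N i t := fun i hi t =>
    (hL i hi.1 hi.2 t).trans (meshMap_eq_mul_add hlt.ne i t).symm
  have hΨ' : IsSelfReferential x 1 N α (rationalPiece x y d α u v 1 N) Ψ := fun i hi t ht => by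
    rw [← hL' i hi, hΨ i hi.1 hi.2 t ht, smul_eq_mul]
  obtain ⟨hdiff, hy, hd, hderiv⟩ := hΨ'.contDiffOn_and_derivWithin hΨc
    (isJoinUp_rationalPiece hmono hu') (isJoinUp_deriv_rationalPiece hmono hu') hmono hmn
    (fun i hi => hα i hi.1 hi.2) hκ1
    (fun i hi _ ht => hasDerivWithinAt_rationalPiece hlt (hu i hi.1 hi.2) (hv i hi.1 hi.2) ht)
    (fun i hi => continuousOn_deriv_rationalPiece hlt (hu i hi.1 hi.2) (hv i hi.1 hi.2))
  refine ⟨hdiff, fun i h₁ h₂ => hy i ⟨h₁, h₂⟩, fun i h₁ h₂ => hd i ⟨h₁, h₂⟩, fun i h₁ h₂ t ht => ?_⟩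
  rw [hL' i ⟨h₁, h₂⟩, hderiv i ⟨h₁, h₂⟩ t ht]
  simp only [smul_eq_mul]
  ring
end

section
/- Let {(x_i, y_i, d_i) : i = 1,...,N} be given data with x_1 < ... < x_N, and let c < min{y_i} and d > max{y_i}. Suppose for each i = 1,...,N−1: 0 ≤ α_i < min{a_i, (y_i − c)/(y_1 − c), (y_{i+1} − c)/(y_N − c), (d − y_i)/(d − y_1), (d − y_{i+1})/(d − y_N)}, u_i > 0, and v_i ≥ max{0, v_{1i}, v_{2i}, v_{3i}, v_{4i}}, where v_{1i} = −u_i[3 + (h_i d_i − α_i(x_N − x_1) d_1)/(y_i − c − α_i(y_1 − c))], v_{2i} = −u_i[3 + (−h_i d_{i+1} + α_i(x_N − x_1) d_N)/(y_{i+1} − c − α_i(y_N − c))], v_{3i} = −u_i[3 + (−h_i d_i + α_i(x_N − x_1) d_1)/(d − y_i − α_i(d − y_1))], v_{4i} = −u_i[3 + (h_i d_{i+1} − α_i(x_N − x_1) d_N)/(d − y_{i+1} − α_i(d − y_N))]. Then the corresponding rational cubic spline fractal interpolation function Ψ satisfies c ≤ Ψ(x) ≤ d for all x ∈ I = [x_1,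 x_N], i.e. its graph lies within the rectangle [x_1, x_N] × [c, d]. -/
/-!
Write `Ψ(Lᵢ(t)) = αᵢ Ψ(t) + qᵢ(t)`. If every `qᵢ ≥ (1 - αᵢ) c`, then `Ψ ≥ c`: at a minimum point
`s = Lᵢ(t)` of `Ψ` we get `Ψ(s) ≥ αᵢ Ψ(t) + (1 - αᵢ) c ≥ αᵢ Ψ(s) + (1 - αᵢ) c`, and `αᵢ < 1`.
The bound on `qᵢ` holds because the weights `u, 3u + v, 3u + v, u` turn the numerator into the
denominator, so that it only has to be checked on the four control coefficients. The upper bound is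
the lower bound for `-Ψ`, which is the spline of the negated data.
-/

open Set

theorem le_of_forall_exists_convexComb_le {X : Type*} [TopologicalSpace X] {K : Set X}
    (hK : IsCompact K) {f : X → ℝ} (hf : LowerSemicontinuousOn f K) {c : ℝ}
    (h : ∀ s ∈ K, ∃ t ∈ K, ∃ r, 0 ≤ r ∧ r < 1 ∧ r * f t + (1 - r) * c ≤ f s) :
    ∀ s ∈ K, c ≤ f s := by
  intro s hs
  obtain ⟨m, hm, hmin⟩ := hf.exists_isMinOn ⟨s, hs⟩ hK
  obtain ⟨t, ht, r, hr0, hr1, hr⟩ := h m hm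
  have hmt : r * f m ≤ r * f t := mul_le_mul_of_nonneg_left (hmin ht) hr0
  have hcm : c ≤ f m := le_of_mul_le_mul_left (by linarith) (sub_pos.2 hr1)
  exact hcm.trans (hmin hs)

theorem exists_mem_Icc_succ {β : Type*} [LinearOrder β] (x : ℕ → β) {m n : ℕ} (hmn : m < n)
    {s : β} (hs : s ∈ Icc (x m) (x n)) :
    ∃ i, m ≤ i ∧ i < n ∧ s ∈ Icc (x i) (x (i + 1)) := by
  obtain ⟨hms, hsn⟩ := hs
  induction n, hmn using Nat.le_induction with
  | base => exact ⟨m, le_rfl, m.lt_succ_self, hms, hsn⟩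
  | succ k hmk ih =>
    rcases le_total s (x k) with hsk | hks
    · obtain ⟨i, hmi, hik, hi⟩ := ih hsk
      exact ⟨i, hmi, hik.trans k.lt_succ_self, hi⟩
    · exact ⟨k, (Nat.lt_of_succ_le hmk).le, k.lt_succ_self, hks, hsn⟩

section RationalCubic

/-- The rational cubic in `θ` with control coefficients `U, V, W, Z` and shape parameters `u, v`. -/
noncomputable def rationalCubic (u v U V W Z θ : ℝ) : ℝ :=
  (U * (1 - θ) ^ 3 + V * θ * (1 - θ) ^ 2 + W * θ ^ 2 * (1 - θ) + Z * θ ^ 3) /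
    (u + v * θ * (1 - θ))

variable {u v U V W Z θ : ℝ}

theorem rationalCubic_neg :
    rationalCubic u v (-U) (-V) (-W) (-Z) θ = -rationalCubic u v U V W Z θ := by
  unfold rationalCubic
  ring

theorem le_rationalCubic {k : ℝ} (hu : 0 < u) (hv : 0 ≤ v) (hθ : θ ∈ Icc 0 1)
    (hU : u * k ≤ U) (hV : (3 * u + v) * k ≤ V) (hW : (3 * u + v) * k ≤ W) (hZ : u * k ≤ Z) :
    k ≤ rationalCubic u v U V W Z θ := by
  have hθ0 : 0 ≤ θ := hθ.1
  have hθ1 : 0 ≤ 1 - θ := sub_nonneg.2 hθ.2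
  have hden : 0 < u + v * θ * (1 - θ) := by positivity
  rw [rationalCubic, le_div_iff₀ hden]
  calc k * (u + v * θ * (1 - θ))
      = u * k * (1 - θ) ^ 3 + (3 * u + v) * k * θ * (1 - θ) ^ 2
          + (3 * u + v) * k * θ ^ 2 * (1 - θ) + u * k * θ ^ 3 := by ring
    _ ≤ U * (1 - θ) ^ 3 + V * θ * (1 - θ) ^ 2 + W * θ ^ 2 * (1 - θ) + Z * θ ^ 3 := by gcongr

theorem mul_add_mul_nonneg_of_neg_mul_le {p m : ℝ} (hp : 0 < p) (h : -u * (3 + m / p) ≤ v) :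
    0 ≤ (3 * u + v) * p + u * m := by
  have hmul : -u * (3 + m / p) * p ≤ v * p := mul_le_mul_of_nonneg_right h hp.le
  have hclear : -u * (3 + m / p) * p = -u * (3 * p + m) := by field_simp
  linarith

end RationalCubic

section NodeMap

/-- The affine map `Lᵢ` sending `[x₁, x_N]` onto `[xᵢ, xᵢ₊₁]`; the nodes are indexed from `1`. -/
noncomputable def nodeMap (x : ℕ → ℝ) (N i : ℕ) (t : ℝ) : ℝ :=
  (x (i + 1) - x i) / (x N - x 1) * t + (x N * x i - x 1 * x (i + 1)) / (x N - x 1)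

variable {x : ℕ → ℝ} {N i : ℕ}

theorem nodeMap_first (hxN : x 1 ≠ x N) : nodeMap x N i (x 1) = x i := by
  have : x N - x 1 ≠ 0 := sub_ne_zero.2 hxN.symm
  rw [nodeMap]
  field_simp
  ring

theorem nodeMap_last (hxN : x 1 ≠ x N) : nodeMap x N i (x N) = x (i + 1) := by
  have : x N - x 1 ≠ 0 := sub_ne_zero.2 hxN.symm
  rw [nodeMap]
  field_simp
  ring

theorem surjOn_nodeMap (hxN : x 1 < x N) :
    SurjOn (nodeMap x N i) (Icc (x 1) (x N)) (Icc (x i) (x (i + 1))) := by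
  have hcont : Continuous (nodeMap x N i) := by unfold nodeMap; fun_prop
  simpa only [nodeMap_first hxN.ne, nodeMap_last hxN.ne] using
    hcont.continuousOn.surjOn_Icc (left_mem_Icc.2 hxN.le) (right_mem_Icc.2 hxN.le)

theorem sub_div_sub_nodes_le_one (hx : MonotoneOn x (Icc 1 N)) (hi : 1 ≤ i) (hiN : i < N) :
    (x (i + 1) - x i) / (x N - x 1) ≤ 1 := by
  have hN : 1 ≤ N := hi.trans hiN.le
  have hfirst : x 1 ≤ x i := hx ⟨le_rfl, hN⟩ ⟨hi, hiN.le⟩ hi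
  have hlast : x (i + 1) ≤ x N := hx ⟨by omega, hiN⟩ ⟨hN, le_rfl⟩ hiN
  have hxN : x 1 ≤ x N := hx ⟨le_rfl, hN⟩ ⟨hN, le_rfl⟩ hN
  exact div_le_one_of_le₀ (sub_le_sub hlast hfirst) (sub_nonneg.2 hxN)

end NodeMap

/-- The function `qᵢ` of the rational cubic spline FIF with values `y` and slopes `d` at the
nodes `x`, scaling factors `α` and shape parameters `u`, `v`. -/
noncomputable def rcsfifPiece (N : ℕ) (x y d α u v : ℕ → ℝ) (i : ℕ) (t : ℝ) : ℝ :=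
  rationalCubic (u i) (v i)
    (u i * (y i - α i * y 1))
    ((3 * u i + v i) * (y i - α i * y 1)
      + u i * (x (i + 1) - x i) * d i - α i * u i * (x N - x 1) * d 1)
    ((3 * u i + v i) * (y (i + 1) - α i * y N)
      - u i * (x (i + 1) - x i) * d (i + 1) + α i * u i * (x N - x 1) * d N)
    (u i * (y (i + 1) - α i * y N))
    ((t - x 1) / (x N - x 1))

section Piece

variable {N i : ℕ} {x y d α u v : ℕ → ℝ} {t : ℝ}

theorem rcsfifPiece_neg :
    rcsfifPiece N x (-y) (-d) α u v i t = -rcsfifPiece N x y d α u v i t := by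
  simp only [rcsfifPiece, ← rationalCubic_neg, Pi.neg_apply]
  ring_nf

theorem le_rcsfifPiece {c : ℝ} (ht : t ∈ Icc (x 1) (x N))
    (hcfirst : c < y 1) (hclast : c < y N)
    (hαleft : α i < (y i - c) / (y 1 - c)) (hαright : α i < (y (i + 1) - c) / (y N - c))
    (hu : 0 < u i) (hv : 0 ≤ v i)
    (hvleft : -(u i) * (3 + ((x (i + 1) - x i) * d i - α i * (x N - x 1) * d 1)
      / (y i - c - α i * (y 1 - c))) ≤ v i)
    (hvright : -(u i) * (3 + (-(x (i + 1) - x i) * d (i + 1) + α i * (x N - x 1) * d N)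
      / (y (i + 1) - c - α i * (y N - c))) ≤ v i) :
    (1 - α i) * c ≤ rcsfifPiece N x y d α u v i t := by
  have hleft : 0 < y i - c - α i * (y 1 - c) :=
    sub_pos.2 ((lt_div_iff₀ (sub_pos.2 hcfirst)).1 hαleft)
  have hright : 0 < y (i + 1) - c - α i * (y N - c) :=
    sub_pos.2 ((lt_div_iff₀ (sub_pos.2 hclast)).1 hαright)
  have hθ : (t - x 1) / (x N - x 1) ∈ Icc (0 : ℝ) 1 :=
    ⟨div_nonneg (sub_nonneg.2 ht.1) (sub_nonneg.2 (ht.1.trans ht.2)),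
      div_le_one_of_le₀ (sub_le_sub_right ht.2 _) (sub_nonneg.2 (ht.1.trans ht.2))⟩
  apply le_rationalCubic hu hv hθ
  · exact mul_le_mul_of_nonneg_left (by linarith) hu.le
  · linarith [mul_add_mul_nonneg_of_neg_mul_le hleft hvleft]
  · linarith [mul_add_mul_nonneg_of_neg_mul_le hright hvright]
  · exact mul_le_mul_of_nonneg_left (by linarith) hu.le

theorem rcsfifPiece_le {c : ℝ} (ht : t ∈ Icc (x 1) (x N))
    (hcfirst : y 1 < c) (hclast : y N < c)
    (hαleft : α i < (c - y i) / (c - y 1)) (hαright : α i < (c - y (i + 1)) / (c - y N))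
    (hu : 0 < u i) (hv : 0 ≤ v i)
    (hvleft : -(u i) * (3 + (-(x (i + 1) - x i) * d i + α i * (x N - x 1) * d 1)
      / (c - y i - α i * (c - y 1))) ≤ v i)
    (hvright : -(u i) * (3 + ((x (i + 1) - x i) * d (i + 1) - α i * (x N - x 1) * d N)
      / (c - y (i + 1) - α i * (c - y N))) ≤ v i) :
    rcsfifPiece N x y d α u v i t ≤ (1 - α i) * c := by
  have hneg : (1 - α i) * -c ≤ rcsfifPiece N x (-y) (-d) α u v i t := by
    refine le_rcsfifPiece ht (neg_lt_neg hcfirst) (neg_lt_neg hclast) ?_ ?_ hu hv ?_ ?_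
    all_goals simp only [Pi.neg_apply, neg_sub_neg]
    · exact hαleft
    · exact hαright
    · convert hvleft using 4
      ring
    · convert hvright using 4
      ring
  rw [rcsfifPiece_neg] at hneg
  linarith

end Piece

/-- `Ψ` is a rational cubic spline FIF: it is continuous on `[x₁, x_N]` and satisfies the functional
equation there. The interpolation conditions `Ψ(xᵢ) = yᵢ` follow when `x₁ ≠ x_N`, `uᵢ ≠ 0` and
`αᵢ ≠ 1`. -/
structure IsRCSFIF (N : ℕ) (x y d α u v : ℕ → ℝ) (Ψ : ℝ → ℝ) : Prop where
  continuousOn : ContinuousOn Ψ (Icc (x 1) (x N))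
  apply_nodeMap : ∀ i, 1 ≤ i → i < N → ∀ t ∈ Icc (x 1) (x N),
    Ψ (nodeMap x N i t) = α i * Ψ t + rcsfifPiece N x y d α u v i t

namespace IsRCSFIF

variable {N : ℕ} {x y d α u v : ℕ → ℝ} {Ψ : ℝ → ℝ} {c : ℝ}

theorem neg (h : IsRCSFIF N x y d α u v Ψ) : IsRCSFIF N x (-y) (-d) α u v (-Ψ) where
  continuousOn := h.continuousOn.neg
  apply_nodeMap i hi hiN t ht := by
    rw [rcsfifPiece_neg, Pi.neg_apply, Pi.neg_apply, h.apply_nodeMap i hi hiN t ht]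
    ring

theorem le_apply (h : IsRCSFIF N x y d α u v Ψ) (hN : 1 < N) (hxN : x 1 < x N)
    (hα : ∀ i, 1 ≤ i → i < N → 0 ≤ α i ∧ α i < 1)
    (hc : ∀ i, 1 ≤ i → i < N → ∀ t ∈ Icc (x 1) (x N),
      (1 - α i) * c ≤ rcsfifPiece N x y d α u v i t) :
    ∀ t ∈ Icc (x 1) (x N), c ≤ Ψ t := by
  refine le_of_forall_exists_convexComb_le isCompact_Icc h.continuousOn.lowerSemicontinuousOn ?_
  intro s hs
  obtain ⟨i, hi, hiN, hsi⟩ := exists_mem_Icc_succ x hN hs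
  obtain ⟨t, ht, rfl⟩ := surjOn_nodeMap hxN hsi
  refine ⟨t, ht, α i, (hα i hi hiN).1, (hα i hi hiN).2, ?_⟩
  rw [h.apply_nodeMap i hi hiN t ht]
  exact add_le_add_right (hc i hi hiN t ht) _

theorem apply_le (h : IsRCSFIF N x y d α u v Ψ) (hN : 1 < N) (hxN : x 1 < x N)
    (hα : ∀ i, 1 ≤ i → i < N → 0 ≤ α i ∧ α i < 1)
    (hc : ∀ i, 1 ≤ i → i < N → ∀ t ∈ Icc (x 1) (x N),
      rcsfifPiece N x y d α u v i t ≤ (1 - α i) * c) :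
    ∀ t ∈ Icc (x 1) (x N), Ψ t ≤ c := by
  intro t ht
  refine neg_le_neg_iff.1 (h.neg.le_apply hN hxN hα (fun i hi hiN s hs ↦ ?_) t ht)
  rw [rcsfifPiece_neg, mul_neg]
  exact neg_le_neg (hc i hi hiN s hs)

end IsRCSFIF

theorem stmt_7_general {N : ℕ} (hN : 1 < N) {x y d α u v : ℕ → ℝ} {c δ : ℝ}
    (hxN : x 1 < x N)
    (hcfirst : c < y 1) (hclast : c < y N) (hδfirst : y 1 < δ) (hδlast : y N < δ)
    (hα : ∀ i, 1 ≤ i → i < N →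
      0 ≤ α i ∧ α i < min 1 (min
        (min ((y i - c) / (y 1 - c)) ((y (i + 1) - c) / (y N - c)))
        (min ((δ - y i) / (δ - y 1)) ((δ - y (i + 1)) / (δ - y N)))))
    (hu : ∀ i, 1 ≤ i → i < N → 0 < u i)
    (hv : ∀ i, 1 ≤ i → i < N →
      max 0 (max
        (max
          (-(u i) * (3 + ((x (i + 1) - x i) * d i - α i * (x N - x 1) * d 1)
            / (y i - c - α i * (y 1 - c))))
          (-(u i) * (3 + (-(x (i + 1) - x i) * d (i + 1) + α i * (x N - x 1) * d N)
            / (y (i + 1) - c - α i * (y N - c)))))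
        (max
          (-(u i) * (3 + (-(x (i + 1) - x i) * d i + α i * (x N - x 1) * d 1)
            / (δ - y i - α i * (δ - y 1))))
          (-(u i) * (3 + ((x (i + 1) - x i) * d (i + 1) - α i * (x N - x 1) * d N)
            / (δ - y (i + 1) - α i * (δ - y N)))))) ≤ v i)
    {Ψ : ℝ → ℝ} (hΨ : IsRCSFIF N x y d α u v Ψ) :
    ∀ t ∈ Icc (x 1) (x N), Ψ t ∈ Icc c δ := by
  simp only [lt_min_iff] at hα
  simp only [max_le_iff] at hv
  have hα01 : ∀ i, 1 ≤ i → i < N → 0 ≤ α i ∧ α i < 1 :=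
    fun i hi hiN ↦ ⟨(hα i hi hiN).1, (hα i hi hiN).2.1⟩
  refine fun t ht ↦ ⟨hΨ.le_apply hN hxN hα01 (fun i hi hiN s hs ↦ ?_) t ht,
    hΨ.apply_le hN hxN hα01 (fun i hi hiN s hs ↦ ?_) t ht⟩
  · obtain ⟨-, -, ⟨hαleft, hαright⟩, -⟩ := hα i hi hiN
    obtain ⟨hv0, ⟨hvleft, hvright⟩, -⟩ := hv i hi hiN
    exact le_rcsfifPiece hs hcfirst hclast hαleft hαright (hu i hi hiN) hv0 hvleft hvright
  · obtain ⟨-, -, -, hαleft, hαright⟩ := hα i hi hiN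
    obtain ⟨hv0, -, hvleft, hvright⟩ := hv i hi hiN
    exact rcsfifPiece_le hs hδfirst hδlast hαleft hαright (hu i hi hiN) hv0 hvleft hvright

/-- Containment of the graph of the RCSFIF in the rectangle
`[x₁, x_N] × [c, δ]`, in the case `0 ≤ αᵢ`. -/
theorem stmt_7
    (N : ℕ) (hN : 2 < N)
    (x y d : ℕ → ℝ) (c δ : ℝ)
    (hx : ∀ i, 1 ≤ i → i < N → x i < x (i + 1))
    (hc : ∀ i, 1 ≤ i → i ≤ N → c < y i)
    (hδ : ∀ i, 1 ≤ i → i ≤ N → y i < δ)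
    (a : ℕ → ℝ) (ha : ∀ i, a i = (x (i + 1) - x i) / (x N - x 1))
    (L : ℕ → ℝ → ℝ)
    (hL : ∀ i, 1 ≤ i → i < N → ∀ t : ℝ, L i t =
      a i * t + (x N * x i - x 1 * x (i + 1)) / (x N - x 1))
    (α u v : ℕ → ℝ)
    (hα : ∀ i, 1 ≤ i → i < N →
      0 ≤ α i ∧ α i < min (a i) (min
        (min ((y i - c) / (y 1 - c)) ((y (i + 1) - c) / (y N - c)))
        (min ((δ - y i) / (δ - y 1)) ((δ - y (i + 1)) / (δ - y N)))))
    (hu : ∀ i, 1 ≤ i → i < N → 0 < u i)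
    (hv : ∀ i, 1 ≤ i → i < N →
      max 0 (max
        (max
          (-(u i) * (3 + ((x (i + 1) - x i) * d i - α i * (x N - x 1) * d 1)
            / (y i - c - α i * (y 1 - c))))
          (-(u i) * (3 + (-(x (i + 1) - x i) * d (i + 1) + α i * (x N - x 1) * d N)
            / (y (i + 1) - c - α i * (y N - c)))))
        (max
          (-(u i) * (3 + (-(x (i + 1) - x i) * d i + α i * (x N - x 1) * d 1)
            / (δ - y i - α i * (δ - y 1))))
          (-(u i) * (3 + ((x (i + 1) - x i) * d (i + 1) - α i * (x N - x 1) * d N)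
            / (δ - y (i + 1) - α i * (δ - y N)))))) ≤ v i)
    (U V W Z : ℕ → ℝ)
    (hU : ∀ i, U i = u i * (y i - α i * y 1))
    (hV : ∀ i, V i = (3 * u i + v i) * (y i - α i * y 1)
      + u i * (x (i + 1) - x i) * d i - α i * u i * (x N - x 1) * d 1)
    (hW : ∀ i, W i = (3 * u i + v i) * (y (i + 1) - α i * y N)
      - u i * (x (i + 1) - x i) * d (i + 1) + α i * u i * (x N - x 1) * d N)
    (hZ : ∀ i, Z i = u i * (y (i + 1) - α i * y N))
    (q : ℕ → ℝ → ℝ)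
    (hq : ∀ (i : ℕ) (t θ : ℝ), θ = (t - x 1) / (x N - x 1) →
      q i t = (U i * (1 - θ) ^ 3 + V i * θ * (1 - θ) ^ 2
        + W i * θ ^ 2 * (1 - θ) + Z i * θ ^ 3) / (u i + v i * θ * (1 - θ)))
    (Ψ : ℝ → ℝ)
    (hΨc : ContinuousOn Ψ (Set.Icc (x 1) (x N)))
    (hΨ : ∀ i, 1 ≤ i → i < N → ∀ t ∈ Set.Icc (x 1) (x N),
      Ψ (L i t) = α i * Ψ t + q i t)
    (hΨy : ∀ i, 1 ≤ i → i ≤ N → Ψ (x i) = y i) :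
    ∀ t ∈ Set.Icc (x 1) (x N), Ψ t ∈ Set.Icc c δ := by
  have hx' : StrictMonoOn x (Icc 1 N) :=
    strictMonoOn_of_lt_add_one ordConnected_Icc fun i _ hi hi' ↦ hx i hi.1 hi'.2
  have hxN : x 1 < x N := hx' ⟨le_rfl, by omega⟩ ⟨by omega, le_rfl⟩ (by omega)
  have hα' : ∀ i, 1 ≤ i → i < N → 0 ≤ α i ∧ α i < min 1 _ := fun i hi hiN ↦
    (hα i hi hiN).imp_right fun hlt ↦
      hlt.trans_le (min_le_min_right _ (ha i ▸ sub_div_sub_nodes_le_one hx'.monotoneOn hi hiN))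
  have hrcsfif : IsRCSFIF N x y d α u v Ψ := ⟨hΨc, fun i hi hiN t ht ↦ by
    simpa only [hL i hi hiN, ha, hq i t _ rfl, hU, hV, hW, hZ, nodeMap, rcsfifPiece,
      rationalCubic] using hΨ i hi hiN t ht⟩
  exact stmt_7_general (by omega) hxN (hc 1 le_rfl (by omega)) (hc N (by omega) le_rfl)
    (hδ 1 le_rfl (by omega)) (hδ N (by omega) le_rfl) hα' hu hv hrcsfif
end
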